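/- arXiv:1509.02715 — 7 statements merged into one kernel-verified Lean document; each statement's English description precedes it below -/
import Mathlib

section
/- Let T > 0 and let h, g, S : [0,T] → ℝ be continuous. Define Φ(θ) = ∫₀^θ (h(t) − S(t))² dt + ∫_θ^T (g(t) − S(t))² dt for θ ∈ [0,T]. If θ̂ ∈ (0,T) is a local minimum point of Φ and h(θ̂) ≠ g(θ̂), then S(θ̂) = (h(θ̂) + g(θ̂))/2. -/
/-- Necessary condition at an interior local minimum of the Kullback–Leibler
distance (the paper's equation (mm)): S(θ̂) = (h(θ̂) + g(θ̂))/2 whenever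
h(θ̂) ≠ g(θ̂). -/
theorem local_min_of_KL_distance_implies_midpoint
    (T : ℝ) (hT : 0 < T) (h g S : ℝ → ℝ)
    (hh : ContinuousOn h (Set.Icc 0 T))
    (hg : ContinuousOn g (Set.Icc 0 T))
    (hS : ContinuousOn S (Set.Icc 0 T))
    (Φ : ℝ → ℝ)
    (hΦ : ∀ θ, Φ θ = (∫ t in (0:ℝ)..θ, (h t - S t) ^ 2) +
      ∫ t in θ..T, (g t - S t) ^ 2)
    (θhat : ℝ) (hθhat : θhat ∈ Set.Ioo (0:ℝ) T)
    (hmin : IsLocalMin Φ θhat)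
    (hne : h θhat ≠ g θhat) :
    S θhat = (h θhat + g θhat) / 2 := by
  obtain ⟨h0, h1⟩ := hθhat
  have hnhds : Set.Icc (0:ℝ) T ∈ nhds θhat := Icc_mem_nhds h0 h1
  have hc1 : ContinuousOn (fun t => (h t - S t) ^ 2) (Set.Icc 0 T) := (hh.sub hS).pow 2
  have hc2 : ContinuousOn (fun t => (g t - S t) ^ 2) (Set.Icc 0 T) := (hg.sub hS).pow 2
  have hmem : Set.Ioo (0:ℝ) T ∈ nhds θhat := Ioo_mem_nhds h0 h1
  have d1 : HasDerivAt (fun θ => ∫ t in (0:ℝ)..θ, (h t - S t) ^ 2)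
      ((h θhat - S θhat) ^ 2) θhat := by
    apply intervalIntegral.integral_hasDerivAt_right
    · apply ContinuousOn.intervalIntegrable_of_Icc h0.le
      exact hc1.mono (Set.Icc_subset_Icc_right h1.le)
    · exact (hc1.mono Set.Ioo_subset_Icc_self).stronglyMeasurableAtFilter isOpen_Ioo _ ⟨h0, h1⟩
    · exact hc1.continuousAt hnhds
  have d2 : HasDerivAt (fun θ => ∫ t in θ..T, (g t - S t) ^ 2)
      (-(g θhat - S θhat) ^ 2) θhat := by
    apply intervalIntegral.integral_hasDerivAt_left
    · apply ContinuousOn.intervalIntegrable_of_Icc h1.le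
      exact hc2.mono (Set.Icc_subset_Icc_left h0.le)
    · exact (hc2.mono Set.Ioo_subset_Icc_self).stronglyMeasurableAtFilter isOpen_Ioo _ ⟨h0, h1⟩
    · exact hc2.continuousAt hnhds
  have d : HasDerivAt Φ ((h θhat - S θhat) ^ 2 + -(g θhat - S θhat) ^ 2) θhat := by
    rw [funext hΦ]
    exact d1.add d2
  have hz := hmin.hasDerivAt_eq_zero d
  have hf : (h θhat - g θhat) * (h θhat + g θhat - 2 * S θhat) = 0 := by linear_combination hz
  rcases mul_eq_zero.mp hf with hA | hA
  · exact absurd (sub_eq_zero.mp hA) hne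
  · linarith
end

section
/- Let 0 ≤ α < β ≤ T and let h, g, S : [0,T] → ℝ be continuous. Define Φ(θ) = ∫₀^θ (h(t) − S(t))² dt + ∫_θ^T (g(t) − S(t))² dt. Suppose h(t) > g(t) for all t ∈ [α,β]. If S(t) < (h(t) + g(t))/2 for all t ∈ [α,β], then Φ is strictly increasing on [α,β] and the minimum of Φ over [α,β] is attained uniquely at α. If instead S(t) > (h(t) + g(t))/2 for all t ∈ [α,β], then Φ is strictly decreasing on [α,β] and its minimum over [α,β] is attained uniquely at β. -/
/-- If S(t) < (h(t)+g(t))/2 on [α,β] (resp. >), then the Kullback–Leibler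
distance Φ is strictly increasing (resp. decreasing) on [α,β], so the
minimizer over [α,β] is the boundary point α (resp. β). -/
theorem KL_distance_monotone_when_no_midpoint_crossing
    (T α β : ℝ) (hα : 0 ≤ α) (hαβ : α < β) (hβT : β ≤ T)
    (h g S : ℝ → ℝ)
    (hh : ContinuousOn h (Set.Icc 0 T))
    (hg : ContinuousOn g (Set.Icc 0 T))
    (hS : ContinuousOn S (Set.Icc 0 T))
    (hhg : ∀ t ∈ Set.Icc α β, g t < h t)
    (Φ : ℝ → ℝ)
    (hΦ : ∀ θ, Φ θ = (∫ t in (0:ℝ)..θ, (h t - S t) ^ 2) +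
      ∫ t in θ..T, (g t - S t) ^ 2) :
    ((∀ t ∈ Set.Icc α β, S t < (h t + g t) / 2) →
      StrictMonoOn Φ (Set.Icc α β) ∧
      ∀ θ ∈ Set.Icc α β, θ ≠ α → Φ α < Φ θ) ∧
    ((∀ t ∈ Set.Icc α β, (h t + g t) / 2 < S t) →
      StrictAntiOn Φ (Set.Icc α β) ∧
      ∀ θ ∈ Set.Icc α β, θ ≠ β → Φ β < Φ θ) := by
  have ch : ContinuousOn (fun t => (h t - S t) ^ 2) (Set.Icc 0 T) := (hh.sub hS).pow 2
  have cg : ContinuousOn (fun t => (g t - S t) ^ 2) (Set.Icc 0 T) := (hg.sub hS).pow 2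
  have int : ∀ f : ℝ → ℝ, ContinuousOn f (Set.Icc 0 T) → ∀ a b, 0 ≤ a → a ≤ b → b ≤ T →
      IntervalIntegrable f MeasureTheory.volume a b := by
    intro f hf a b ha hab hb
    apply ContinuousOn.intervalIntegrable
    rw [Set.uIcc_of_le hab]
    exact hf.mono (Set.Icc_subset_Icc ha hb)
  have key : ∀ a b, 0 ≤ a → a ≤ b → b ≤ T →
      Φ b - Φ a = (∫ t in a..b, (h t - S t) ^ 2) - ∫ t in a..b, (g t - S t) ^ 2 := by
    intro a b ha hab hb
    have e1 := intervalIntegral.integral_add_adjacent_intervals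
      (int _ ch 0 a le_rfl ha (hab.trans hb)) (int _ ch a b ha hab hb)
    have e2 := intervalIntegral.integral_add_adjacent_intervals
      (int _ cg a b ha hab hb) (int _ cg b T (ha.trans hab) hb le_rfl)
    rw [hΦ, hΦ]
    linarith
  have lt : ∀ f₁ f₂ : ℝ → ℝ, ContinuousOn f₁ (Set.Icc 0 T) → ContinuousOn f₂ (Set.Icc 0 T) →
      (∀ t ∈ Set.Icc α β, f₁ t < f₂ t) → ∀ a ∈ Set.Icc α β, ∀ b ∈ Set.Icc α β, a < b →
      (∫ t in a..b, f₁ t) < ∫ t in a..b, f₂ t := by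
    intro f₁ f₂ h₁ h₂ hlt a ha b hb hab
    have hsub : Set.Icc a b ⊆ Set.Icc 0 T :=
      Set.Icc_subset_Icc (hα.trans ha.1) (hb.2.trans hβT)
    exact intervalIntegral.integral_lt_integral_of_continuousOn_of_le_of_exists_lt hab
      (h₁.mono hsub) (h₂.mono hsub)
      (fun t ht => (hlt t ⟨ha.1.trans ht.1.le, ht.2.trans hb.2⟩).le)
      ⟨a, ⟨le_rfl, hab.le⟩, hlt a ha⟩
  constructor
  · intro hs
    have mono : StrictMonoOn Φ (Set.Icc α β) := by
      intro a ha b hb hab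
      have k := key a b (hα.trans ha.1) hab.le (hb.2.trans hβT)
      have l := lt _ _ cg ch
        (fun t ht => by nlinarith [mul_pos (sub_pos.2 (hhg t ht)) (sub_pos.2 (hs t ht))])
        a ha b hb hab
      linarith
    exact ⟨mono, fun θ hθ hne => mono ⟨le_rfl, hαβ.le⟩ hθ (lt_of_le_of_ne hθ.1 hne.symm)⟩
  · intro hs
    have anti : StrictAntiOn Φ (Set.Icc α β) := by
      intro a ha b hb hab
      have k := key a b (hα.trans ha.1) hab.le (hb.2.trans hβT)
      have l := lt _ _ ch cg
        (fun t ht => by nlinarith [mul_pos (sub_pos.2 (hhg t ht)) (sub_pos.2 (hs t ht))])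
        a ha b hb hab
      linarith
    exact ⟨anti, fun θ hθ hne => anti hθ ⟨hαβ.le, le_rfl⟩ (lt_of_le_of_ne hθ.2 hne)⟩
end

section
/- Let T > 0 and θ₀ ∈ [0,T]. Define Φ(θ) = ∫₀^T (sgn(t − θ) − (t − θ₀))² dt for θ ∈ [0,T], where sgn(x) = 1 for x > 0, sgn(x) = −1 for x < 0, sgn(0) = 0. Then Φ(θ) − Φ(θ₀) = 2 (θ − θ₀)² for all θ ∈ [0,T]; in particular θ₀ is the unique minimizer of Φ on [0,T]. -/
open MeasureTheory in
/-- On an interval where the sign is constant, the integrand is integrable with explicit integral. -/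
theorem piece_aux (θ θ₀ c a b : ℝ) (hab : a ≤ b)
    (h : ∀ t ∈ Set.Ioo a b, Real.sign (t - θ) = c) :
    IntervalIntegrable (fun t => (Real.sign (t - θ) - (t - θ₀)) ^ 2) volume a b ∧
    ∫ t in a..b, (Real.sign (t - θ) - (t - θ₀)) ^ 2
      = (b - θ₀ - c) ^ 3 / 3 - (a - θ₀ - c) ^ 3 / 3 := by
  have hE : Set.EqOn (fun t => (c - (t - θ₀)) ^ 2)
      (fun t => (Real.sign (t - θ) - (t - θ₀)) ^ 2) (Set.Ioo a b) := by
    intro t ht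
    simp only [h t ht]
  have hi : IntervalIntegrable (fun t : ℝ => (c - (t - θ₀)) ^ 2) volume a b :=
    Continuous.intervalIntegrable (by fun_prop) a b
  refine ⟨hi.congr_uIoo (Set.uIoo_of_le hab ▸ hE), ?_⟩
  rw [← intervalIntegral.integral_congr_Ioo_of_le hab hE]
  refine intervalIntegral.integral_eq_sub_of_hasDerivAt
    (f := fun t => (t - θ₀ - c) ^ 3 / 3) (fun x _ => ?_) hi
  have := ((((hasDerivAt_id x).sub_const θ₀).sub_const c).pow 3).div_const 3
  refine HasDerivAt.congr_deriv this ?_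
  norm_num
  ring

theorem total_aux (T θ₀ θ : ℝ) (hθ : θ ∈ Set.Icc (0:ℝ) T) :
    ∫ t in (0:ℝ)..T, (Real.sign (t - θ) - (t - θ₀)) ^ 2
      = ((θ - θ₀ - (-1)) ^ 3 / 3 - (0 - θ₀ - (-1)) ^ 3 / 3)
        + ((T - θ₀ - 1) ^ 3 / 3 - (θ - θ₀ - 1) ^ 3 / 3) := by
  obtain ⟨i1, e1⟩ := piece_aux θ θ₀ (-1) 0 θ hθ.1
    (fun t ht => Real.sign_of_neg (by linarith [ht.2]))
  obtain ⟨i2, e2⟩ := piece_aux θ θ₀ 1 θ T hθ.2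
    (fun t ht => Real.sign_of_pos (by linarith [ht.1]))
  rw [← intervalIntegral.integral_add_adjacent_intervals i1 i2, e1, e2]

/-- Example 1 identification: for the true smooth signal t − θ₀ and the
theoretical discontinuous signal sgn(t − θ), the Kullback–Leibler distance
satisfies Φ(θ) − Φ(θ₀) = 2(θ − θ₀)², so θ₀ is the unique minimizer. -/
theorem example1_KL_identification
    (T θ₀ : ℝ) (hT : 0 < T) (hθ₀ : θ₀ ∈ Set.Icc (0:ℝ) T)
    (Φ : ℝ → ℝ)
    (hΦ : ∀ θ, Φ θ = ∫ t in (0:ℝ)..T, (Real.sign (t - θ) - (t - θ₀)) ^ 2) :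
    (∀ θ ∈ Set.Icc (0:ℝ) T, Φ θ - Φ θ₀ = 2 * (θ - θ₀) ^ 2) ∧
    (∀ θ ∈ Set.Icc (0:ℝ) T, θ ≠ θ₀ → Φ θ₀ < Φ θ) := by
  have key : ∀ θ ∈ Set.Icc (0:ℝ) T, Φ θ - Φ θ₀ = 2 * (θ - θ₀) ^ 2 := by
    intro θ hθ
    rw [hΦ, hΦ, total_aux T θ₀ θ hθ, total_aux T θ₀ θ₀ hθ₀]
    ring
  refine ⟨key, fun θ hθ hne => ?_⟩
  have h1 := key θ hθ
  have h2 : 0 < (θ - θ₀) ^ 2 := by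
    have := sub_ne_zero.mpr hne
    positivity
  linarith
end

section
/- Let 0 < α < θ₀ < β < T and let h, g, q, r : [0,T] → ℝ be continuous. Define S(t) = (h(t) + q(t))·1{t < θ₀} + (g(t) + r(t))·1{t ≥ θ₀} and, for θ ∈ [α,β], Φ(θ) = ∫₀^T (M(θ,t) − S(t))² dt where M(θ,t) = h(t)·1{t < θ} + g(t)·1{t ≥ θ}. Then Φ is differentiable on (α,θ₀) and on (θ₀,β), with Φ'(θ) = −(h(θ) − g(θ))(h(θ) − g(θ) + 2q(θ)) for θ ∈ (α,θ₀), and Φ'(θ) = (h(θ) − g(θ))(h(θ) − g(θ) − 2r(θ)) for θ ∈ (θ₀,β). -/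
open MeasureTheory Set Filter Topology in
theorem aux_int (T c : ℝ) (hT : 0 < T) (F G : ℝ → ℝ)
    (hF : ContinuousOn F (Icc 0 T)) (hG : ContinuousOn G (Icc 0 T)) :
    IntervalIntegrable (fun t => if t < c then F t else G t) volume 0 T := by
  rw [intervalIntegrable_iff_integrableOn_Icc_of_le hT.le]
  have h1 : IntegrableOn F (Icc 0 T) := hF.integrableOn_Icc
  have h2 : IntegrableOn G (Icc 0 T) := hG.integrableOn_Icc
  have := Integrable.piecewise (s := Iio c) (μ := volume.restrict (Icc 0 T)) measurableSet_Iio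
    (Integrable.integrableOn h1) (Integrable.integrableOn h2)
  refine Integrable.congr this (Eventually.of_forall fun t => ?_)
  simp [Set.piecewise]

open MeasureTheory Set Filter Topology in
theorem aux_deriv (T θ : ℝ) (h0 : 0 < θ) (hT : θ < T) (P Q : ℝ → ℝ)
    (hP : IntervalIntegrable P volume 0 T) (hQ : IntervalIntegrable Q volume 0 T)
    (cP : ContinuousAt P θ) (cQ : ContinuousAt Q θ) :
    HasDerivAt (fun x => ∫ t in (0:ℝ)..T, if t < x then P t else Q t) (P θ - Q θ) θ := by
  have hD := hP.sub hQ
  have key : HasDerivAt (fun x => (∫ t in (0:ℝ)..T, Q t) + ∫ t in (0:ℝ)..x, (P t - Q t))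
      (P θ - Q θ) θ := by
    refine HasDerivAt.const_add _ ?_
    refine intervalIntegral.integral_hasDerivAt_right (f := fun t => P t - Q t) ?_ ?_ (cP.sub cQ)
    · refine hD.mono_set ?_
      rw [uIcc_of_le h0.le, uIcc_of_le (h0.trans hT).le]
      exact Icc_subset_Icc le_rfl hT.le
    · refine ⟨Icc 0 T, Icc_mem_nhds h0 hT, ?_⟩
      exact ((intervalIntegrable_iff_integrableOn_Icc_of_le (h0.trans hT).le).1
        hD).aestronglyMeasurable
  refine key.congr_of_eventuallyEq ?_
  filter_upwards [Ioo_mem_nhds h0 hT] with x hx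
  have s1 : uIcc 0 x ⊆ uIcc 0 T := by
    rw [uIcc_of_le hx.1.le, uIcc_of_le (h0.trans hT).le]
    exact Icc_subset_Icc le_rfl hx.2.le
  have s2 : uIcc x T ⊆ uIcc 0 T := by
    rw [uIcc_of_le hx.2.le, uIcc_of_le (h0.trans hT).le]
    exact Icc_subset_Icc hx.1.le le_rfl
  have e1 : ∀ᵐ t, t ∈ uIoc 0 x → P t = if t < x then P t else Q t := by
    filter_upwards [Measure.ae_ne volume x] with t ht hm
    rw [uIoc_of_le hx.1.le] at hm
    rw [if_pos (lt_of_le_of_ne hm.2 ht)]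
  have e2 : ∀ t ∈ uIoc x T, Q t = if t < x then P t else Q t := by
    intro t hm
    rw [uIoc_of_le hx.2.le] at hm
    rw [if_neg (not_lt.2 hm.1.le)]
  have i1 : IntervalIntegrable (fun t => if t < x then P t else Q t) volume 0 x :=
    (hP.mono_set s1).congr_ae ((ae_restrict_iff' measurableSet_uIoc).2 e1)
  have i2 : IntervalIntegrable (fun t => if t < x then P t else Q t) volume x T :=
    (hQ.mono_set s2).congr_ae
      ((ae_restrict_iff' measurableSet_uIoc).2 (Eventually.of_forall e2))
  rw [← intervalIntegral.integral_add_adjacent_intervals i1 i2,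
    ← intervalIntegral.integral_add_adjacent_intervals (hQ.mono_set s1) (hQ.mono_set s2),
    intervalIntegral.integral_sub (hP.mono_set s1) (hQ.mono_set s1),
    ← intervalIntegral.integral_congr_ae e1,
    ← intervalIntegral.integral_congr_ae (Eventually.of_forall e2)]
  ring

/-- Section 3.3 (discontinuous versus discontinuous): derivative of the
Kullback–Leibler distance between the theoretical change-point signal
M(θ,t) = h(t)·1{t<θ} + g(t)·1{t≥θ} and the perturbed true signal
S(t) = (h+q)(t)·1{t<θ₀} + (g+r)(t)·1{t≥θ₀}, on both sides of θ₀. -/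
theorem KL_deriv_discontinuous_vs_discontinuous
    (T α β θ₀ : ℝ) (hα : 0 < α) (hαθ : α < θ₀) (hθβ : θ₀ < β) (hβT : β < T)
    (h g q r : ℝ → ℝ)
    (hh : ContinuousOn h (Set.Icc 0 T))
    (hg : ContinuousOn g (Set.Icc 0 T))
    (hq : ContinuousOn q (Set.Icc 0 T))
    (hr : ContinuousOn r (Set.Icc 0 T))
    (S : ℝ → ℝ)
    (hS : ∀ t, S t = if t < θ₀ then h t + q t else g t + r t)
    (M : ℝ → ℝ → ℝ)
    (hM : ∀ θ t, M θ t = if t < θ then h t else g t)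
    (Φ : ℝ → ℝ)
    (hΦ : ∀ θ, Φ θ = ∫ t in (0:ℝ)..T, (M θ t - S t) ^ 2) :
    (∀ θ ∈ Set.Ioo α θ₀,
      HasDerivAt Φ (-((h θ - g θ) * (h θ - g θ + 2 * q θ))) θ) ∧
    (∀ θ ∈ Set.Ioo θ₀ β,
      HasDerivAt Φ ((h θ - g θ) * (h θ - g θ - 2 * r θ)) θ) := by
  have hT : 0 < T := by linarith
  have hA := aux_int T θ₀ hT (fun t => q t ^ 2) (fun t => (h t - g t - r t) ^ 2)
    (hq.pow 2) (((hh.sub hg).sub hr).pow 2)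
  have hB := aux_int T θ₀ hT (fun t => (g t - h t - q t) ^ 2) (fun t => r t ^ 2)
    (((hg.sub hh).sub hq).pow 2) (hr.pow 2)
  have hΦ' : Φ = fun x => ∫ t in (0:ℝ)..T, if t < x then
      (if t < θ₀ then q t ^ 2 else (h t - g t - r t) ^ 2) else
      (if t < θ₀ then (g t - h t - q t) ^ 2 else r t ^ 2) := by
    funext x
    rw [hΦ]
    congr 1
    funext t
    rw [hM, hS]
    split_ifs <;> ring
  have cont : ∀ {f : ℝ → ℝ} {θ : ℝ}, ContinuousOn f (Set.Icc 0 T) → 0 < θ → θ < T →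
      ContinuousAt f θ := fun hf h1 h2 => hf.continuousAt (Icc_mem_nhds h1 h2)
  constructor
  · rintro θ ⟨h1, h2⟩
    have p0 : 0 < θ := by linarith
    have pT : θ < T := by linarith
    have ev : ∀ F G : ℝ → ℝ, (fun t => if t < θ₀ then F t else G t) =ᶠ[nhds θ] F := by
      intro F G
      filter_upwards [Iio_mem_nhds h2] with t ht
      exact if_pos ht
    have := aux_deriv T θ p0 pT _ _ hA hB
      ((cont (hq.pow 2) p0 pT).congr (ev _ _).symm)
      ((cont (((hg.sub hh).sub hq).pow 2) p0 pT).congr (ev _ _).symm)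
    rw [hΦ']
    convert this using 1
    simp only [if_pos h2]
    ring
  · rintro θ ⟨h1, h2⟩
    have p0 : 0 < θ := by linarith
    have pT : θ < T := by linarith
    have ev : ∀ F G : ℝ → ℝ, (fun t => if t < θ₀ then F t else G t) =ᶠ[nhds θ] G := by
      intro F G
      filter_upwards [Ioi_mem_nhds h1] with t ht
      exact if_neg (not_lt.2 (le_of_lt ht))
    have := aux_deriv T θ p0 pT _ _ hA hB
      ((cont (((hh.sub hg).sub hr).pow 2) p0 pT).congr (ev _ _).symm)
      ((cont (hr.pow 2) p0 pT).congr (ev _ _).symm)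
    rw [hΦ']
    convert this using 1
    simp only [if_neg (not_lt.2 h1.le)]
    ring
end

section
/- Let 0 < α < θ₀ < β < T and let h, g, q, r : [0,T] → ℝ be continuous. Define S(t) = (h(t) + q(t))·1{t < θ₀} + (g(t) + r(t))·1{t ≥ θ₀} and, for θ ∈ [α,β], Φ(θ) = ∫₀^T (M(θ,t) − S(t))² dt where M(θ,t) = h(t)·1{t < θ} + g(t)·1{t ≥ θ}. Assume that for all t ∈ [α,β]: h(t) − g(t) > 0, q(t) > (g(t) − h(t))/2, and r(t) < (h(t) − g(t))/2. Then Φ is strictly decreasing on [α,θ₀], strictly increasing on [θ₀,β], and θ₀ is the unique minimizer of Φ on [α,β]. -/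
open MeasureTheory in
lemma ite_lt_intervalIntegrable (T θ : ℝ) (hT : 0 ≤ T) (f g : ℝ → ℝ)
    (hf : IntervalIntegrable f volume 0 T) (hg : IntervalIntegrable g volume 0 T) :
    IntervalIntegrable (fun t => if t < θ then f t else g t) volume 0 T := by
  rw [intervalIntegrable_iff_integrableOn_Ioc_of_le hT] at *
  have := Integrable.piecewise (s := Set.Iio θ) measurableSet_Iio
    (Integrable.integrableOn hf) (Integrable.integrableOn hg)
  refine this.congr (Filter.Eventually.of_forall fun t => ?_)
  simp [Set.piecewise]

open MeasureTheory in
lemma integral_lt_of_lt_on_Ico (T a b : ℝ) (ha : 0 < a) (hab : a < b) (hbT : b < T)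
    (F G : ℝ → ℝ) (hF : IntervalIntegrable F volume 0 T) (hG : IntervalIntegrable G volume 0 T)
    (hlt : ∀ t, a ≤ t → t < b → F t < G t)
    (heq : ∀ t, t < a ∨ b ≤ t → F t = G t) :
    ∫ t in (0:ℝ)..T, F t < ∫ t in (0:ℝ)..T, G t := by
  refine intervalIntegral.integral_lt_integral_of_ae_le_of_measure_setOf_lt_ne_zero
    (by linarith) hF hG (Filter.Eventually.of_forall fun t => ?_) ?_
  · by_cases h1 : t < a
    · exact (heq t (Or.inl h1)).le
    · by_cases h2 : t < b
      · exact (hlt t (not_lt.1 h1) h2).le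
      · exact (heq t (Or.inr (not_lt.1 h2))).le
  · have hpos : 0 < (volume.restrict (Set.Ioc 0 T)) (Set.Ioo a b) := by
      rw [Measure.restrict_apply measurableSet_Ioo, Set.inter_eq_left.2]
      · simp [hab]
      · intro t ht
        exact ⟨ha.trans ht.1, (ht.2.trans hbT).le⟩
    refine (hpos.trans_le (measure_mono fun t ht => ?_)).ne'
    exact hlt t ht.1.le ht.2

/-- Section 3.3 Proposition (identification): under h − g > 0,
q > (g − h)/2 and r < (h − g)/2 on [α,β], the Kullback–Leibler distance Φ
is strictly decreasing on [α,θ₀], strictly increasing on [θ₀,β], and θ₀ is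
its unique minimizer on [α,β]. -/
theorem KL_unique_minimizer_discontinuous_vs_discontinuous
    (T α β θ₀ : ℝ) (hα : 0 < α) (hαθ : α < θ₀) (hθβ : θ₀ < β) (hβT : β < T)
    (h g q r : ℝ → ℝ)
    (hh : ContinuousOn h (Set.Icc 0 T))
    (hg : ContinuousOn g (Set.Icc 0 T))
    (hq : ContinuousOn q (Set.Icc 0 T))
    (hr : ContinuousOn r (Set.Icc 0 T))
    (hpos : ∀ t ∈ Set.Icc α β, 0 < h t - g t)
    (hqc : ∀ t ∈ Set.Icc α β, (g t - h t) / 2 < q t)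
    (hrc : ∀ t ∈ Set.Icc α β, r t < (h t - g t) / 2)
    (S : ℝ → ℝ)
    (hS : ∀ t, S t = if t < θ₀ then h t + q t else g t + r t)
    (M : ℝ → ℝ → ℝ)
    (hM : ∀ θ t, M θ t = if t < θ then h t else g t)
    (Φ : ℝ → ℝ)
    (hΦ : ∀ θ, Φ θ = ∫ t in (0:ℝ)..T, (M θ t - S t) ^ 2) :
    StrictAntiOn Φ (Set.Icc α θ₀) ∧
    StrictMonoOn Φ (Set.Icc θ₀ β) ∧
    (∀ θ ∈ Set.Icc α β, θ ≠ θ₀ → Φ θ₀ < Φ θ) := by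
  have hT : 0 ≤ T := by linarith
  have hint : ∀ θ, IntervalIntegrable (fun t => (M θ t - S t) ^ 2) MeasureTheory.volume 0 T := by
    intro θ
    have key : ∀ f : ℝ → ℝ, ContinuousOn f (Set.Icc 0 T) →
        IntervalIntegrable f MeasureTheory.volume 0 T := fun f hf =>
      ContinuousOn.intervalIntegrable_of_Icc hT hf
    have := ite_lt_intervalIntegrable T θ hT _ _
      (ite_lt_intervalIntegrable T θ₀ hT _ _
        (key (fun t => (h t - (h t + q t)) ^ 2) (by fun_prop))
        (key (fun t => (h t - (g t + r t)) ^ 2) (by fun_prop)))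
      (ite_lt_intervalIntegrable T θ₀ hT _ _
        (key (fun t => (g t - (h t + q t)) ^ 2) (by fun_prop))
        (key (fun t => (g t - (g t + r t)) ^ 2) (by fun_prop)))
    convert this using 2 with t
    rw [hM, hS]
    split_ifs <;> rfl
  have heq : ∀ a b, a < b → ∀ t, t < a ∨ b ≤ t → M a t = M b t := by
    intro a b hab t ht
    rw [hM, hM]
    rcases ht with ht | ht
    · rw [if_pos ht, if_pos (ht.trans hab)]
    · rw [if_neg (not_lt.2 (hab.le.trans ht)), if_neg (not_lt.2 ht)]
  have hanti : StrictAntiOn Φ (Set.Icc α θ₀) := by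
    intro a ha b hb hab
    rw [hΦ, hΦ]
    refine integral_lt_of_lt_on_Ico T a b (hα.trans_le ha.1) hab (by linarith [hb.2]) _ _
      (hint b) (hint a) (fun t h1 h2 => ?_) (fun t ht => by rw [heq a b hab t ht])
    have ht : t ∈ Set.Icc α β := ⟨ha.1.trans h1, by linarith [hb.2]⟩
    rw [hM, hM, hS, if_pos h2, if_neg (not_lt.2 h1), if_pos (h2.trans_le hb.2)]
    have p1 := hpos t ht
    have p2 := hqc t ht
    nlinarith [mul_pos p1 (show 0 < h t - g t + 2 * q t by linarith)]
  have hmono : StrictMonoOn Φ (Set.Icc θ₀ β) := by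
    intro a ha b hb hab
    rw [hΦ, hΦ]
    refine integral_lt_of_lt_on_Ico T a b (by linarith [ha.1]) hab (by linarith [hb.2]) _ _
      (hint a) (hint b) (fun t h1 h2 => ?_) (fun t ht => by rw [heq a b hab t ht])
    have ht : t ∈ Set.Icc α β := ⟨by linarith [ha.1], by linarith [hb.2]⟩
    rw [hM, hM, hS, if_pos h2, if_neg (not_lt.2 h1), if_neg (not_lt.2 (ha.1.trans h1))]
    have p1 := hpos t ht
    have p2 := hrc t ht
    nlinarith [mul_pos p1 (show 0 < h t - g t - 2 * r t by linarith)]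
  refine ⟨hanti, hmono, fun θ hθ hne => ?_⟩
  rcases lt_or_gt_of_ne hne with hl | hl
  · exact hanti ⟨hθ.1, hl.le⟩ ⟨hαθ.le, le_rfl⟩ hl
  · exact hmono ⟨le_rfl, hθβ.le⟩ ⟨hl.le, hθ.2⟩ hl
end

section
/- Let T > 0, κ > 1/2, and θ₀ ∈ [0,T]. Define Φ(θ) = ∫₀^T ( sgn(t − θ) − sgn(t − θ₀) |t − θ₀|^κ )² dt for θ ∈ [0,T], where sgn(x) = 1 for x > 0, sgn(x) = −1 for x < 0, sgn(0) = 0. Then Φ(θ) − Φ(θ₀) = 4 |θ − θ₀|^{1+κ} / (1 + κ) for all θ ∈ [0,T]; in particular θ₀ is the unique minimizer of Φ on [0,T]. -/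
lemma aux_meas_sign : Measurable Real.sign := by
  unfold Real.sign
  exact Measurable.ite measurableSet_Iio measurable_const
    (Measurable.ite measurableSet_Ioi measurable_const measurable_const)

lemma aux_abs_sign (x : ℝ) : |Real.sign x| ≤ 1 := by
  rcases Real.sign_apply_eq x with h | h | h <;> rw [h] <;> norm_num

lemma aux_integrable (T κ θ₀ θ : ℝ) (hκ : 1 / 2 < κ) :
    IntervalIntegrable (fun t => (Real.sign (t - θ) - Real.sign (t - θ₀) * |t - θ₀| ^ κ) ^ 2)
      MeasureTheory.volume 0 T := by
  have hc : Continuous (fun t : ℝ => |t - θ₀| ^ κ) :=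
    (by fun_prop : Continuous (fun t : ℝ => |t - θ₀|)).rpow_const (fun _ => Or.inr (by linarith))
  have hb : IntervalIntegrable (fun t : ℝ => (1 + |t - θ₀| ^ κ) ^ 2) MeasureTheory.volume 0 T :=
    ((continuous_const.add hc).pow 2).intervalIntegrable _ _
  refine hb.mono_fun' ?_ ?_
  · have h1 := aux_meas_sign.comp (measurable_id.sub_const θ)
    have h2 := aux_meas_sign.comp (measurable_id.sub_const θ₀)
    exact ((h1.sub (h2.mul hc.measurable)).pow_const 2).aestronglyMeasurable
  · refine Filter.Eventually.of_forall fun t => ?_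
    have hp : 0 ≤ |t - θ₀| ^ κ := by positivity
    simp only [norm_pow, Real.norm_eq_abs]
    gcongr
    refine (abs_sub _ _).trans (add_le_add (aux_abs_sign _) ?_)
    rw [abs_mul, abs_of_nonneg hp]
    exact mul_le_of_le_one_left hp (aux_abs_sign _)

lemma aux_pow (κ d : ℝ) (hκ : 1 / 2 < κ) (hd : 0 ≤ d) :
    ∫ t in (0:ℝ)..d, |t| ^ κ = d ^ (1 + κ) / (1 + κ) := by
  have : ∫ t in (0:ℝ)..d, |t| ^ κ = ∫ t in (0:ℝ)..d, t ^ κ := by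
    refine intervalIntegral.integral_congr fun t ht => ?_
    rw [Set.uIcc_of_le hd] at ht
    simp only [abs_of_nonneg ht.1]
  rw [this, integral_rpow (Or.inl (by linarith)), Real.zero_rpow (by linarith), add_comm κ 1,
    sub_zero]

lemma aux_uIoc (κ θ₀ θ : ℝ) (hκ : 1 / 2 < κ) :
    ∫ t in Set.uIoc θ₀ θ, 4 * |t - θ₀| ^ κ = 4 * |θ - θ₀| ^ (1 + κ) / (1 + κ) := by
  rw [MeasureTheory.integral_const_mul, mul_div_assoc]
  congr 1
  rcases le_total θ₀ θ with h | h
  · rw [Set.uIoc_of_le h, ← intervalIntegral.integral_of_le h,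
      intervalIntegral.integral_comp_sub_right (fun t => |t| ^ κ), sub_self,
      aux_pow κ _ hκ (by linarith), abs_of_nonneg (by linarith)]
  · rw [Set.uIoc_of_ge h, ← intervalIntegral.integral_of_le h]
    have : ∫ t in θ..θ₀, |t - θ₀| ^ κ = ∫ t in θ..θ₀, |θ₀ - t| ^ κ := by
      simp only [abs_sub_comm]
    rw [this, intervalIntegral.integral_comp_sub_left (fun t => |t| ^ κ), sub_self,
      aux_pow κ _ hκ (by linarith), abs_sub_comm, abs_of_nonneg (by linarith)]

lemma aux_pointwise (κ θ₀ θ t : ℝ) (h0 : t ≠ θ₀) (h1 : t ≠ θ) :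
    (Real.sign (t - θ) - Real.sign (t - θ₀) * |t - θ₀| ^ κ) ^ 2 -
      (Real.sign (t - θ₀) - Real.sign (t - θ₀) * |t - θ₀| ^ κ) ^ 2 =
    (Set.uIoc θ₀ θ).indicator (fun t => 4 * |t - θ₀| ^ κ) t := by
  rcases lt_or_gt_of_ne h0 with a | a <;> rcases lt_or_gt_of_ne h1 with b | b
  · rw [Set.indicator_of_notMem (by rw [Set.mem_uIoc]; rintro (h | h) <;> linarith), Real.sign_of_neg (sub_neg.2 a),
      Real.sign_of_neg (sub_neg.2 b)]
    ring
  · rw [Set.indicator_of_mem (Set.mem_uIoc.2 <| Or.inr ⟨b, a.le⟩), Real.sign_of_neg (sub_neg.2 a),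
      Real.sign_of_pos (sub_pos.2 b)]
    ring
  · rw [Set.indicator_of_mem (Set.mem_uIoc.2 <| Or.inl ⟨a, b.le⟩), Real.sign_of_pos (sub_pos.2 a),
      Real.sign_of_neg (sub_neg.2 b)]
    ring
  · rw [Set.indicator_of_notMem (by rw [Set.mem_uIoc]; rintro (h | h) <;> linarith), Real.sign_of_pos (sub_pos.2 a),
      Real.sign_of_pos (sub_pos.2 b)]
    ring

/-- Remark 1 identification: for the true smooth signal
sgn(t − θ₀)|t − θ₀|^κ (κ > 1/2) and the theoretical discontinuous signal
sgn(t − θ), the Kullback–Leibler distance satisfies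
Φ(θ) − Φ(θ₀) = 4|θ − θ₀|^{1+κ}/(1+κ), so θ₀ is its unique minimizer. -/
theorem remark1_KL_identification
    (T κ θ₀ : ℝ) (hT : 0 < T) (hκ : 1 / 2 < κ) (hθ₀ : θ₀ ∈ Set.Icc (0:ℝ) T)
    (Φ : ℝ → ℝ)
    (hΦ : ∀ θ, Φ θ = ∫ t in (0:ℝ)..T,
      (Real.sign (t - θ) - Real.sign (t - θ₀) * |t - θ₀| ^ κ) ^ 2) :
    (∀ θ ∈ Set.Icc (0:ℝ) T,
      Φ θ - Φ θ₀ = 4 * |θ - θ₀| ^ (1 + κ) / (1 + κ)) ∧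
    (∀ θ ∈ Set.Icc (0:ℝ) T, θ ≠ θ₀ → Φ θ₀ < Φ θ) := by
  have key : ∀ θ ∈ Set.Icc (0:ℝ) T,
      Φ θ - Φ θ₀ = 4 * |θ - θ₀| ^ (1 + κ) / (1 + κ) := by
    intro θ hθ
    rw [hΦ, hΦ, ← intervalIntegral.integral_sub (aux_integrable T κ θ₀ θ hκ)
      (aux_integrable T κ θ₀ θ₀ hκ), ← aux_uIoc κ θ₀ θ hκ,
      intervalIntegral.integral_of_le hT.le]
    have hsub : Set.uIoc θ₀ θ ⊆ Set.Ioc 0 T := by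
      intro t ht
      rcases Set.mem_uIoc.1 ht with h | h
      · exact ⟨hθ₀.1.trans_lt h.1, h.2.trans hθ.2⟩
      · exact ⟨hθ.1.trans_lt h.1, h.2.trans hθ₀.2⟩
    have hae : ∀ᵐ t ∂(MeasureTheory.volume.restrict (Set.Ioc (0:ℝ) T)),
        (Real.sign (t - θ) - Real.sign (t - θ₀) * |t - θ₀| ^ κ) ^ 2 -
          (Real.sign (t - θ₀) - Real.sign (t - θ₀) * |t - θ₀| ^ κ) ^ 2 =
        (Set.uIoc θ₀ θ).indicator (fun t => 4 * |t - θ₀| ^ κ) t := by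
      apply MeasureTheory.ae_restrict_of_ae
      filter_upwards [MeasureTheory.Measure.ae_ne MeasureTheory.volume θ₀,
        MeasureTheory.Measure.ae_ne MeasureTheory.volume θ] with t h0 h1
      exact aux_pointwise κ θ₀ θ t h0 h1
    rw [MeasureTheory.integral_congr_ae hae,
      MeasureTheory.setIntegral_indicator measurableSet_uIoc, Set.inter_eq_right.2 hsub]
  refine ⟨key, fun θ hθ hne => ?_⟩
  have h := key θ hθ
  have hp : 0 < |θ - θ₀| := abs_pos.2 (sub_ne_zero.2 hne)
  have h2 : 0 < 4 * |θ - θ₀| ^ (1 + κ) / (1 + κ) :=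
    div_pos (mul_pos (by norm_num) (Real.rpow_pos_of_pos hp _)) (by linarith)
  linarith
end

section
/- Let 0 < α < θ₀ < β < T, let w : [0,T] → ℝ be continuous, let ε > 0, and define X : [0,T] → ℝ by X(t) = t²/2 − θ₀ t + ε w(t). If θ̂ ∈ [α,β] is a minimizer of X over [α,β] (equivalently, a maximizer over [α,β] of the pathwise pseudo log-likelihood θ ↦ X(T) − 2 X(θ)), then (θ̂ − θ₀)² ≤ 4 ε · sup_{t ∈ [α,β]} |w(t)|. -/
/-- Pathwise consistency bound for Example 1: for the observed path
X(t) = t²/2 − θ₀t + εw(t), any minimizer θ̂ of X over [α,β] (equivalently,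
maximizer of the pathwise pseudo log-likelihood θ ↦ X(T) − 2X(θ)) satisfies
(θ̂ − θ₀)² ≤ 4ε·sup_{[α,β]}|w|. -/
theorem example1_pathwise_consistency
    (T α β θ₀ : ℝ) (hα : 0 < α) (hαθ : α < θ₀) (hθβ : θ₀ < β) (hβT : β < T)
    (w : ℝ → ℝ) (hw : ContinuousOn w (Set.Icc 0 T))
    (ε : ℝ) (hε : 0 < ε)
    (X : ℝ → ℝ) (hX : ∀ t, X t = t ^ 2 / 2 - θ₀ * t + ε * w t)
    (θhat : ℝ) (hθhat : θhat ∈ Set.Icc α β)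
    (hmin : ∀ θ ∈ Set.Icc α β, X θhat ≤ X θ) :
    (θhat - θ₀) ^ 2 ≤ 4 * ε * sSup ((fun t => |w t|) '' Set.Icc α β) := by
  have hc : ContinuousOn (fun t => |w t|) (Set.Icc α β) :=
    (hw.mono (Set.Icc_subset_Icc hα.le hβT.le)).abs
  have hb : BddAbove ((fun t => |w t|) '' Set.Icc α β) :=
    (isCompact_Icc.image_of_continuousOn hc).bddAbove
  have hθ₀ : θ₀ ∈ Set.Icc α β := ⟨hαθ.le, hθβ.le⟩
  have h1 : |w θhat| ≤ sSup ((fun t => |w t|) '' Set.Icc α β) :=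
    le_csSup hb ⟨θhat, hθhat, rfl⟩
  have h2 : |w θ₀| ≤ sSup ((fun t => |w t|) '' Set.Icc α β) :=
    le_csSup hb ⟨θ₀, hθ₀, rfl⟩
  have h3 := hmin θ₀ hθ₀
  rw [hX, hX] at h3
  generalize sSup ((fun t => |w t|) '' Set.Icc α β) = S at h1 h2 ⊢
  have h4 : w θ₀ - w θhat ≤ 2 * S := by
    linarith [le_abs_self (w θ₀), neg_abs_le (w θhat)]
  have h5 := mul_le_mul_of_nonneg_left h4 hε.le
  nlinarith
end
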